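/- Let β = √((5+√17)/2) and let Δ' be the graph with the 12 vertices {1, a, 2, c, 3, e, 4, 5, c̃, g, 6, ã} and the 11 edges 1–a, a–2, 2–c, c–3, 3–e, e–4, e–5, 5–c̃, 5–g, g–6, 6–ã. Let A be the (real symmetric) adjacency matrix of Δ'. Then the strictly positive vector μ given by μ(1) = 1, μ(a) = μ(ã) = β, μ(2) = β² − 1, μ(c) = μ(c̃) = β³ − 2β, μ(3) = 2β² − 1, μ(e) = β³ + β, μ(4) = β² + 1, μ(5) = 3β² − 2, μ(g) = β³ − β, μ(6) = β² satisfies A·μ = β·μ; moreover β is an eigenvalue of A and every eigenvalue t of A satisfies |t| ≤ β (so the operator norm of A equals β). -/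

import Mathlib

namespace AsaedaHaagerupStmt3

/-- Vertex indexing: 0 = 1, 1 = a, 2 = 2, 3 = c, 4 = 3, 5 = e, 6 = 4,
7 = 5, 8 = c̃, 9 = g, 10 = 6, 11 = ã. -/
def edges : List (Fin 12 × Fin 12) :=
  [(0, 1), (1, 2), (2, 3), (3, 4), (4, 5), (5, 6), (5, 7), (7, 8), (7, 9),
   (9, 10), (10, 11)]

/-- The adjacency matrix of the graph Δ'. -/
def A : Matrix (Fin 12) (Fin 12) ℝ :=
  fun i j => if (i, j) ∈ edges ∨ (j, i) ∈ edges then 1 else 0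

noncomputable def beta : ℝ := Real.sqrt ((5 + Real.sqrt 17) / 2)

/-- The Perron–Frobenius vector μ. -/
noncomputable def mu : Fin 12 → ℝ :=
  ![1, beta, beta ^ 2 - 1, beta ^ 3 - 2 * beta, 2 * beta ^ 2 - 1,
    beta ^ 3 + beta, beta ^ 2 + 1, 3 * beta ^ 2 - 2, beta ^ 3 - 2 * beta,
    beta ^ 3 - beta, beta ^ 2, beta]

/-!
The matrix `A` has nonnegative entries and `mu` is a strictly positive eigenvector with eigenvalue
`beta`; row by row, the eigenvector equation reduces to `beta ^ 4 = 5 * beta ^ 2 - 2`.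
If a nonnegative matrix `M` and a positive vector `w` satisfy `M w ≤ b w`, then every eigenvalue `t`
of `M` has `|t| ≤ b`: for an eigenvector `v`, evaluate `|t| |v| = |M v| ≤ M |v|` at a coordinate
where `|v i| / w i` is largest.
-/

open Matrix

section NonnegativeMatrix

variable {m n R : Type*}

lemma abs_mulVec_le_mulVec_abs [Fintype n] [Ring R] [LinearOrder R] [IsOrderedRing R]
    {M : Matrix m n R} (hM : ∀ i j, 0 ≤ M i j) (v : n → R) : |M *ᵥ v| ≤ M *ᵥ |v| := fun i =>
  calc |∑ j, M i j * v j| ≤ ∑ j, |M i j * v j| := Finset.abs_sum_le_sum_abs _ _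
    _ = ∑ j, M i j * |v j| := by simp only [abs_mul, abs_of_nonneg (hM _ _)]

lemma exists_abs_le_smul_of_pos [Finite n] [Field R] [LinearOrder R] [IsStrictOrderedRing R]
    {v w : n → R} (hw : ∀ i, 0 < w i) (hv : v ≠ 0) :
    ∃ r > 0, |v| ≤ r • w ∧ ∃ k, |v k| = r * w k := by
  obtain ⟨i, hi⟩ := Function.ne_iff.mp hv
  have : Nonempty n := ⟨i⟩
  obtain ⟨k, hk⟩ := Finite.exists_max fun j => |v j| / w j
  refine ⟨|v k| / w k, ?_, fun j => (div_le_iff₀ (hw j)).mp (hk j), k,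
    (div_mul_cancel₀ _ (hw k).ne').symm⟩
  exact (div_pos (abs_pos.mpr hi) (hw i)).trans_le (hk i)

theorem abs_eigenvalue_le_of_mulVec_le_smul [Fintype n] [Field R] [LinearOrder R]
    [IsStrictOrderedRing R] {M : Matrix n n R} (hM : ∀ i j, 0 ≤ M i j)
    {w : n → R} (hw : ∀ i, 0 < w i) {b : R} (hMw : M *ᵥ w ≤ b • w)
    {t : R} {v : n → R} (hv : v ≠ 0) (hMv : M *ᵥ v = t • v) : |t| ≤ b := by
  obtain ⟨r, hr, hvw, k, hk⟩ := exists_abs_le_smul_of_pos hw hv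
  refine le_of_mul_le_mul_right ?_ (mul_pos hr (hw k))
  calc |t| * (r * w k) = |(M *ᵥ v) k| := by rw [hMv, ← hk, Pi.smul_apply, smul_eq_mul, abs_mul]
    _ ≤ (M *ᵥ |v|) k := abs_mulVec_le_mulVec_abs hM v k
    _ ≤ (M *ᵥ (r • w)) k := dotProduct_le_dotProduct_of_nonneg_left hvw (hM k)
    _ = r * (M *ᵥ w) k := by rw [mulVec_smul, Pi.smul_apply, smul_eq_mul]
    _ ≤ r * (b * w k) := mul_le_mul_of_nonneg_left (hMw k) hr.le
    _ = b * (r * w k) := mul_left_comm _ _ _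

end NonnegativeMatrix

lemma beta_sq : beta ^ 2 = (5 + √17) / 2 :=
  Real.sq_sqrt (by positivity)

lemma beta_pow_four : beta ^ 4 = 5 * beta ^ 2 - 2 := by
  have h17 : √17 ^ 2 = (17 : ℝ) := Real.sq_sqrt (by norm_num)
  linear_combination (beta ^ 2 + (5 + √17) / 2 - 5) * beta_sq + h17 / 4

lemma two_lt_beta : 2 < beta := by
  have h17 : (4 : ℝ) < √17 := Real.lt_sqrt_of_sq_lt (by norm_num)
  exact Real.lt_sqrt_of_sq_lt (by linarith)

lemma A_nonneg (i j : Fin 12) : 0 ≤ A i j := by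
  unfold A
  split_ifs <;> norm_num

lemma A_mulVec (v : Fin 12 → ℝ) :
    A *ᵥ v = ![v 1, v 0 + v 2, v 1 + v 3, v 2 + v 4, v 3 + v 5, v 4 + v 6 + v 7, v 5,
      v 5 + v 8 + v 9, v 7, v 7 + v 10, v 9 + v 11, v 10] := by
  ext i
  fin_cases i <;> simp [mulVec, dotProduct, Fin.sum_univ_succ, A, edges] <;> ring

lemma mu_pos (i : Fin 12) : 0 < mu i := by
  have hβ : 0 < beta := two_pos.trans two_lt_beta
  have hβ_sq : 4 < beta ^ 2 := by nlinarith [two_lt_beta]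
  have hβ_cube : 4 * beta < beta ^ 3 := by nlinarith
  fin_cases i <;> simp [mu, -sub_pos] <;> linarith

lemma A_mulVec_mu : A *ᵥ mu = beta • mu := by
  rw [A_mulVec]
  ext i
  fin_cases i <;> simp [mu] <;> linarith [beta_pow_four]

theorem asaeda_haagerup_stmt3 :
    (∀ i, 0 < mu i) ∧
    A.mulVec mu = beta • mu ∧
    (∃ v : Fin 12 → ℝ, v ≠ 0 ∧ A.mulVec v = beta • v) ∧
    (∀ t : ℝ, (∃ v : Fin 12 → ℝ, v ≠ 0 ∧ A.mulVec v = t • v) → |t| ≤ beta) := by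
  have mu_ne_zero : mu ≠ 0 := fun h => (mu_pos 0).ne' (congrFun h 0)
  exact ⟨mu_pos, A_mulVec_mu, ⟨mu, mu_ne_zero, A_mulVec_mu⟩, fun _ ⟨_, hv, hAv⟩ =>
    abs_eigenvalue_le_of_mulVec_le_smul A_nonneg mu_pos A_mulVec_mu.le hv hAv⟩

end AsaedaHaagerupStmt3
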